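/- Lower bound for the robust bundling revenue at the near-optimal price: let μ > 0, 0 < d < 2μ, and 0 < ε < 1 − d/(2μ), and for each m set p*_m(ε) = (1−ε)²·m·(μ − d/(2(1−ε))). Then liminf_{m→∞} inf_{P^m ∈ P(μ,d)^m} BUND(p*_m(ε), P^m)/m ≥ (1−ε)²·(μ − d/(2(1−ε))). -/

import Mathlib

/-!
Every `X ∈ P(μ,d)` satisfies `min X μ = (X + μ - |X - μ|) / 2`, so its truncation `Y = min X μ`
has mean exactly `μ - d/2` and takes values in `[0, μ]`; in particular its variance is at most
`μ²/4`, although `X` itself may have infinite variance. Since `∑ Xᵢ ≥ ∑ Yᵢ`, Chebyshev's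
inequality for `∑ Yᵢ` shows that any price `m (μ - d/2 - δ)` with `δ > 0` is reached with
probability at least `1 - μ²/(4δ²m)`, uniformly over the ambiguity set
(`one_sub_le_prob_sum_ge`). The price `p*_m(ε)` has this form with
`δ = ε (μ (2 - ε) - d/2) > 0`, so the worst-case revenue per good is at least
`c (1 - K/m)` with `c = p*_m(ε) / m`, and this tends to `c`.

The infimum is a conditionally complete one, with `sInf ∅ = 0`, so it is also needed that the
ambiguity set is nonempty (`meanMAD_nonempty`).
-/

open MeasureTheory Filter Set
open scoped ENNReal

noncomputable section

/-- The mean-MAD ambiguity set: Borel probability measures on `[0,∞)` (modeled as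
probability measures on `ℝ` giving zero mass to `(-∞,0)`) with mean `μ` and
mean absolute deviation `d`. -/
def MeanMAD (μ d : ℝ) : Set (ProbabilityMeasure ℝ) :=
  {P | (P : Measure ℝ) (Set.Iio 0) = 0 ∧
       Integrable (fun x => x) (P : Measure ℝ) ∧
       (∫ x, x ∂(P : Measure ℝ)) = μ ∧
       (∫ x, |x - μ| ∂(P : Measure ℝ)) = d}

/-- A probability measure whose support consists of exactly two points. -/
def IsTwoPoint (P : ProbabilityMeasure ℝ) : Prop :=
  ∃ x y : ℝ, x ≠ y ∧ (P : Measure ℝ) ({x, y} : Set ℝ)ᶜ = 0 ∧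
    (P : Measure ℝ) {x} ≠ 0 ∧ (P : Measure ℝ) {y} ≠ 0

/-- The subset of the mean-MAD ambiguity set consisting of two-point distributions. -/
def MeanMAD2 (μ d : ℝ) : Set (ProbabilityMeasure ℝ) :=
  {P ∈ MeanMAD μ d | IsTwoPoint P}

/-- A deterministic mechanism for selling `m` goods: a measurable allocation rule with
values in `{0,1}^m` and a measurable nonnegative payment rule. -/
structure Mech (m : ℕ) where
  alloc : (Fin m → ℝ) → (Fin m → ℝ)
  price : (Fin m → ℝ) → ℝ
  alloc_meas : Measurable alloc
  price_meas : Measurable price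
  alloc01 : ∀ v i, alloc v i = 0 ∨ alloc v i = 1
  price_nonneg : ∀ v, 0 ≤ price v

/-- Truthfulness: incentive compatibility and individual rationality on `[0,∞)^m`. -/
def Truthful {m : ℕ} (D : Mech m) : Prop :=
  (∀ v w : Fin m → ℝ, (∀ i, 0 ≤ v i) → (∀ i, 0 ≤ w i) →
    (∑ i, D.alloc w i * v i) - D.price w ≤ (∑ i, D.alloc v i * v i) - D.price v) ∧
  (∀ v : Fin m → ℝ, (∀ i, 0 ≤ v i) → 0 ≤ (∑ i, D.alloc v i * v i) - D.price v)

/-- Expected revenue of a mechanism under a joint distribution of valuations. -/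
def REV {m : ℕ} (D : Mech m) (Pm : Measure (Fin m → ℝ)) : ℝ :=
  ∫ v, D.price v ∂Pm

/-- Revenue of the bundling mechanism with price `p`. -/
def BUND {m : ℕ} (p : ℝ) (Pm : Measure (Fin m → ℝ)) : ℝ :=
  p * (Pm {v | p ≤ ∑ i, v i}).toReal

/-- Optimal deterministic revenue for a known joint distribution. -/
def OPT (m : ℕ) (Pm : Measure (Fin m → ℝ)) : ℝ :=
  sSup {r | ∃ D : Mech m, Truthful D ∧ r = REV D Pm}

/-- The joint (product) measure of a family of independent marginals. -/
def jointMeasure {m : ℕ} (P : Fin m → ProbabilityMeasure ℝ) : Measure (Fin m → ℝ) :=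
  Measure.pi (fun i => (P i : Measure ℝ))

/-- Maximin value over deterministic truthful mechanisms. -/
def maximinVal (A : Set (ProbabilityMeasure ℝ)) (m : ℕ) : ℝ :=
  sSup {r | ∃ D : Mech m, Truthful D ∧
    r = sInf {s | ∃ P : Fin m → ProbabilityMeasure ℝ, (∀ i, P i ∈ A) ∧
      s = REV D (jointMeasure P) / m}}

/-- Minimax value over deterministic truthful mechanisms. -/
def minimaxVal (A : Set (ProbabilityMeasure ℝ)) (m : ℕ) : ℝ :=
  sInf {r | ∃ P : Fin m → ProbabilityMeasure ℝ, (∀ i, P i ∈ A) ∧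
    r = sSup {s | ∃ D : Mech m, Truthful D ∧ s = REV D (jointMeasure P) / m}}

/-- The ambiguity set contains the two-point law with mass `q = d/(2μ)` at `0` and mass `1 - q`
at `μ/(1-q)`. -/
lemma meanMAD_nonempty (μ d : ℝ) (hμ : 0 < μ) (hd0 : 0 < d) (hd : d < 2 * μ) :
    (MeanMAD μ d).Nonempty := by
  obtain ⟨q, hq⟩ : ∃ q, q = d / (2 * μ) := ⟨_, rfl⟩
  have hq0 : 0 < q := by rw [hq]; positivity
  have hq1 : q < 1 := by rw [hq, div_lt_one (by positivity)]; exact hd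
  have hdq : d = 2 * μ * q := by rw [hq]; field_simp
  have h1q : 0 < 1 - q := by linarith
  set y := μ / (1 - q) with hy
  have hyμ : (1 - q) * y = μ := by rw [hy]; field_simp
  have hy0 : 0 < y := by positivity
  have hyge : μ ≤ y := by nlinarith
  set ν : Measure ℝ := ENNReal.ofReal q • Measure.dirac 0 +
    ENNReal.ofReal (1 - q) • Measure.dirac y with hν
  have hprob : IsProbabilityMeasure ν := by
    constructor
    simp only [hν, Measure.add_apply, Measure.smul_apply, measure_univ, smul_eq_mul, mul_one]
    rw [← ENNReal.ofReal_add hq0.le h1q.le]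
    simp
  have hint : ∀ f : ℝ → ℝ, ∀ a, ∀ t : ℝ, Integrable f (ENNReal.ofReal t • Measure.dirac a) :=
    fun f a t => (integrable_dirac (by simp)).smul_measure ENNReal.ofReal_ne_top
  have hval : ∀ f : ℝ → ℝ, ∫ x, f x ∂ν = q * f 0 + (1 - q) * f y := by
    intro f
    rw [hν, integral_add_measure (hint f _ _) (hint f _ _), integral_smul_measure,
      integral_smul_measure, integral_dirac, integral_dirac, ENNReal.toReal_ofReal hq0.le,
      ENNReal.toReal_ofReal h1q.le]
    rfl
  refine ⟨⟨ν, hprob⟩, ?_, ?_, ?_, ?_⟩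
  · simp [hν, hy0.le]
  · exact (hint _ _ _).add_measure (hint _ _ _)
  · change ∫ x, x ∂ν = μ
    rw [hval]; linarith
  · change ∫ x, |x - μ| ∂ν = d
    rw [hval, zero_sub, abs_neg, abs_of_pos hμ, abs_of_nonneg (by linarith), hdq]
    linarith

/-- Truncating at the mean costs exactly half of the mean absolute deviation. -/
lemma integral_min_of_mem_meanMAD {μ d : ℝ} {P : ProbabilityMeasure ℝ} (hP : P ∈ MeanMAD μ d) :
    ∫ x, min x μ ∂(P : Measure ℝ) = μ - d / 2 := by
  obtain ⟨-, hint, hmean, hmad⟩ := hP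
  have hmin : ∀ x : ℝ, min x μ = (x + μ - |x - μ|) / 2 := fun x => by
    rcases le_total x μ with h | h
    · rw [min_eq_left h, abs_of_nonpos (by linarith)]
      ring
    · rw [min_eq_right h, abs_of_nonneg (by linarith)]
      ring
  have hsum : Integrable (fun x => x + μ) (P : Measure ℝ) := hint.add (integrable_const _)
  have habs : Integrable (fun x => |x - μ|) (P : Measure ℝ) :=
    (hint.sub (integrable_const μ)).abs
  simp_rw [hmin]
  rw [integral_div, integral_sub hsum habs, integral_add hint (integrable_const _), hmean, hmad]
  simp
  ring

open ProbabilityTheory in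
/-- Uniform weak law: a price below `m (μ - d/2)` by a margin `m δ` is reached with probability
`1 - O(1/m)`, where the constant depends only on `μ` and `δ`. -/
lemma one_sub_le_prob_sum_ge {μ d δ : ℝ} (hμ : 0 < μ) (hδ : 0 < δ) {m : ℕ} (hm : 0 < m)
    {P : Fin m → ProbabilityMeasure ℝ} (hP : ∀ i, P i ∈ MeanMAD μ d) :
    1 - μ ^ 2 / (4 * δ ^ 2) / m ≤
      (jointMeasure P {v | m * (μ - d / 2 - δ) ≤ ∑ i, v i}).toReal := by
  have hm' : (0 : ℝ) < m := by exact_mod_cast hm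
  have hbdd : ∀ i, ∀ᵐ x ∂(P i : Measure ℝ), min x μ ∈ Set.Icc 0 μ := by
    intro i
    have h0 : ∀ᵐ x ∂(P i : Measure ℝ), x ∉ Set.Iio 0 := measure_eq_zero_iff_ae_notMem.mp (hP i).1
    filter_upwards [h0] with x hx
    exact ⟨le_min (not_lt.mp hx) hμ.le, min_le_right _ _⟩
  have hmeas : Measurable fun x : ℝ => min x μ := by fun_prop
  have hLp : ∀ i, MemLp (fun x : ℝ => min x μ) 2 (P i : Measure ℝ) := fun i =>
    memLp_of_bounded (hbdd i) hmeas.aestronglyMeasurable 2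
  set Q : Measure (Fin m → ℝ) := Measure.pi (fun i => (P i : Measure ℝ)) with hQ
  set S : (Fin m → ℝ) → ℝ := ∑ i, fun v => min (v i) μ with hS
  have hSv : ∀ v, S v = ∑ i, min (v i) μ := fun v => by simp [hS]
  have hcoord : ∀ i, MemLp (fun v : Fin m → ℝ => min (v i) μ) 2 Q := fun i =>
    (hLp i).comp_measurePreserving (measurePreserving_eval _ i)
  have hSLp : MemLp S 2 Q := memLp_finsetSum' _ fun i _ => hcoord i
  have hmean : ∫ v, S v ∂Q = m * (μ - d / 2) := by
    simp_rw [hSv]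
    rw [integral_finsetSum _ fun i _ => (hcoord i).integrable (by norm_num)]
    have : ∀ i, ∫ v, min (v i) μ ∂Q = μ - d / 2 := fun i => by
      rw [← integral_min_of_mem_meanMAD (hP i)]
      exact integral_comp_eval (μ := fun i => (P i : Measure ℝ)) (f := fun x : ℝ => min x μ)
        hmeas.aestronglyMeasurable
    simp only [this, Finset.sum_const, Finset.card_univ, Fintype.card_fin, nsmul_eq_mul]
  have hvar : variance S Q ≤ m * (μ / 2) ^ 2 := by
    rw [hS, hQ, variance_sum_pi hLp]
    calc _ ≤ ∑ _i : Fin m, (μ / 2) ^ 2 := Finset.sum_le_sum fun i _ => by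
          simpa using variance_le_sq_of_bounded (hbdd i) hmeas.aemeasurable
      _ = _ := by simp
  have hcheb := meas_ge_le_variance_div_sq hSLp (mul_pos hm' hδ)
  have hA : MeasurableSet {v : Fin m → ℝ | m * (μ - d / 2 - δ) ≤ ∑ i, v i} :=
    measurableSet_le measurable_const (by fun_prop)
  have hcompl : Q {v : Fin m → ℝ | m * (μ - d / 2 - δ) ≤ ∑ i, v i}ᶜ ≤
      ENNReal.ofReal (μ ^ 2 / (4 * δ ^ 2) / m) := by
    refine (measure_mono ?_).trans (hcheb.trans (ENNReal.ofReal_le_ofReal ?_))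
    · intro v hv
      simp only [mem_compl_iff, mem_ofPred_eq, not_le] at hv ⊢
      have hle : S v ≤ ∑ i, v i := by
        rw [hSv]
        exact Finset.sum_le_sum fun i _ => min_le_left _ _
      rw [hmean, le_abs]
      right
      linarith
    · calc variance S Q / (m * δ) ^ 2 ≤ m * (μ / 2) ^ 2 / (m * δ) ^ 2 := by gcongr
        _ = _ := by field_simp; norm_num
  change _ ≤ Q.real _
  have hreal : Q.real {v : Fin m → ℝ | m * (μ - d / 2 - δ) ≤ ∑ i, v i}ᶜ ≤
      μ ^ 2 / (4 * δ ^ 2) / m := ENNReal.toReal_le_of_le_ofReal (by positivity) hcompl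
  rw [probReal_compl_eq_one_sub hA] at hreal
  linarith

/-- Lower bound for the robust bundling revenue at the near-optimal price
`p*_m(ε) = (1-ε)² m (μ - d/(2(1-ε)))`. -/
theorem bundling_lower_at_near_optimal_price (μ d ε : ℝ) (hμ : 0 < μ) (hd0 : 0 < d)
    (hd : d < 2 * μ) (hε0 : 0 < ε) (hε : ε < 1 - d / (2 * μ)) :
    (1 - ε) ^ 2 * (μ - d / (2 * (1 - ε))) ≤
      liminf (fun m : ℕ =>
        sInf {s | ∃ P : Fin m → ProbabilityMeasure ℝ, (∀ i, P i ∈ MeanMAD μ d) ∧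
          s = BUND ((1 - ε) ^ 2 * m * (μ - d / (2 * (1 - ε)))) (jointMeasure P) / m})
        atTop := by
  have hdμ : d / (2 * μ) * (2 * μ) = d := by field_simp
  have hε1 : 0 < 1 - ε := by
    have : 0 < d / (2 * μ) := by positivity
    linarith
  obtain ⟨c, hc⟩ : ∃ c, c = (1 - ε) ^ 2 * (μ - d / (2 * (1 - ε))) := ⟨_, rfl⟩
  have hc' : c = (1 - ε) * ((1 - ε) * μ - d / 2) := by rw [hc]; field_simp
  have hc0 : 0 < c := by
    rw [hc']
    refine mul_pos hε1 ?_
    nlinarith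
  obtain ⟨δ, hδdef⟩ : ∃ δ, δ = ε * (μ * (2 - ε) - d / 2) := ⟨_, rfl⟩
  have hδ : 0 < δ := by
    rw [hδdef]
    refine mul_pos hε0 ?_
    nlinarith
  have hcδ : c = μ - d / 2 - δ := by rw [hc', hδdef]; ring
  obtain ⟨P₀, hP₀⟩ := meanMAD_nonempty μ d hμ hd0 hd
  have hprice : ∀ m : ℕ, (1 - ε) ^ 2 * m * (μ - d / (2 * (1 - ε))) = m * c := fun m => by
    rw [hc]; ring
  simp_rw [hprice]
  rw [← hc]
  set F : ℕ → Set ℝ := fun m => {s | ∃ P : Fin m → ProbabilityMeasure ℝ,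
    (∀ i, P i ∈ MeanMAD μ d) ∧ s = BUND (m * c) (jointMeasure P) / m} with hF
  change c ≤ liminf (fun m => sInf (F m)) atTop
  have hne : ∀ m, (F m).Nonempty := fun m => ⟨_, fun _ => P₀, fun _ => hP₀, rfl⟩
  have hlow : ∀ m : ℕ, 0 < m → c * (1 - μ ^ 2 / (4 * δ ^ 2) / m) ≤ sInf (F m) := by
    intro m hm
    have hm' : (0 : ℝ) < m := by exact_mod_cast hm
    refine le_csInf (hne m) ?_
    rintro s ⟨P, hP, rfl⟩
    have h := one_sub_le_prob_sum_ge hμ hδ hm hP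
    rw [← hcδ] at h
    rw [BUND, mul_assoc, mul_div_cancel_left₀ _ hm'.ne']
    gcongr
  have hup : ∀ m : ℕ, 0 < m → sInf (F m) ≤ c := by
    intro m hm
    have hm' : (0 : ℝ) < m := by exact_mod_cast hm
    have hbdd : BddBelow (F m) := by
      refine ⟨0, ?_⟩
      rintro s ⟨P, -, rfl⟩
      rw [BUND]
      positivity
    refine (csInf_le hbdd ⟨fun _ => P₀, fun _ => hP₀, rfl⟩).trans ?_
    have : IsProbabilityMeasure (jointMeasure fun _ : Fin m => P₀) := by
      unfold jointMeasure; infer_instance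
    rw [BUND, mul_assoc, mul_div_cancel_left₀ _ hm'.ne']
    exact mul_le_of_le_one_right hc0.le measureReal_le_one
  have hlim : Tendsto (fun m : ℕ => c * (1 - μ ^ 2 / (4 * δ ^ 2) / m)) atTop (nhds c) := by
    have h := ((tendsto_const_div_atTop_nhds_zero_nat
      (μ ^ 2 / (4 * δ ^ 2))).const_sub 1).const_mul c
    simpa using h
  rw [← hlim.liminf_eq]
  refine liminf_le_liminf ?_ hlim.isBoundedUnder_ge ?_
  · filter_upwards [eventually_gt_atTop 0] with m hm using hlow m hm
  · refine IsBoundedUnder.isCoboundedUnder_ge ⟨c, ?_⟩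
    rw [eventually_map]
    filter_upwards [eventually_gt_atTop 0] with m hm using hup m hm

end
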